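/- Suppose (i) E has supersingular reduction at all primes of F above p; (ii) λ_cyc^± is surjective; (iii) H^2(F_S/F, E_{p^∞}) = 0; and (iv) H^1(Γ, Sel_p^±(E/F_cyc)) = 0 (equivalently, λ_cyc^{±,Γ} is surjective, equivalently δ^± is surjective). Then the Λ(Γ)-module given by the Pontryagin dual of Sel_p^±(E/F_cyc) admits no non-trivial finite submodule. -/

import Mathlib

/-!
The vanishing of `H^1(Γ, Sel_p^±(E/F_cyc))` says that `g - 1` is surjective on the signed Selmer
group, so dually `T` is injective on the Pontryagin dual `X` (`eq_zero_of_X_smul_eq_zero`).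
If `y` lies in a finite submodule, two of the elements `T^k • y` coincide; cancelling powers of
`T` gives `(1 - T^k) • y = 0` for some `k ≥ 1`. As `1 - T^k` is a unit of `ℤ_p⟦T⟧`, `y = 0`.
-/

/-!
# Setting (Hatley–Lei, "On Selmer groups in the supersingular reduction case", §4)

Let `p` be an odd prime, `F' ⊆ F` number fields and `E/F'` an elliptic curve with good
reduction at all primes above `p`.  Let `S_p^ss` be the nonempty set of primes `v` of
`F'` above `p` at which `E` is supersingular; for each such `v` we assume `F'_v = ℚ_p`,
`a_v = 1 + p - #Ẽ(F'_v) = 0`, and that `v` is unramified in `F`.  Let `S_{p,F}^ss` be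
the set of primes of `F` above `S_p^ss` and `S` the set of primes of `F` above `p`
together with the bad-reduction primes.  `F_cyc` denotes the cyclotomic `Z_p`-extension
of `F` with layers `F_n` and `Γ = Gal(F_cyc/F) ≅ ℤ_p`.

For `v ∈ S_{p,F}^ss`, `E^±(F_{n,v}) ⊆ Ê(F_{n,v})` are Kobayashi's plus/minus norm
groups, and `J_v^±(E/F_cyc) = lim_→ ⊕_{w∣v} H^1(F_{n,w}, E_{p^∞})/(E^±(F_{n,w}) ⊗ ℚ_p/ℤ_p)`;
for the other `v ∈ S`, `J_v^±(E/F_cyc) = J_v(E/F_cyc)`.  The signed Selmer group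
`Sel_p^±(E/F_cyc)` is the kernel of
`λ_cyc^± : H^1(F_S/F_cyc, E_{p^∞}) → ⊕_{v∈S} J_v^±(E/F_cyc)`.

Since `Γ ≅ ℤ_p` is procyclic and acts continuously on the discrete modules over
`F_cyc`, we model the `Γ`-action by the action of a fixed topological generator `g`;
`Γ`-invariants are fixed points of `g` and (continuous) `H^1(Γ, ·)` is the cokernel of
`g - 1`.  The structure below records the data of the plus/minus fundamental diagram,
for one fixed choice of sign `±`. -/

structure PMCycSelmerSetting where
  /-- the odd prime `p` -/
  p : ℕ
  [fact_p : Fact p.Prime]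
  hodd : p ≠ 2
  /-- the base number field `F'` of the elliptic curve -/
  F' : Type
  [fieldF' : Field F']
  [nfF' : NumberField F']
  /-- the number field `F ⊇ F'` -/
  F : Type
  [fieldF : Field F]
  [nfF : NumberField F]
  [algF : Algebra F' F]
  /-- the elliptic curve `E/F'`, with good reduction at all primes above `p`; at each
  supersingular prime `v` we assume `F'_v = ℚ_p`, `a_v = 0` and `v` unramified in `F` -/
  E : WeierstrassCurve F'
  [ellE : E.IsElliptic]
  /-- the finite set `S` of primes of `F` above `p` together with the bad reduction primes -/
  S : Type
  [finS : Fintype S]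
  /-- the predicate `v ∣ p` on `S` -/
  overP : S → Prop
  /-- the predicate "`v ∈ S_{p,F}^ss`", i.e. `v` lies above a supersingular prime of `F'` -/
  sss : S → Prop
  /-- primes in `S_{p,F}^ss` lie above `p` -/
  sss_over : ∀ v, sss v → overP v
  /-- `S_p^ss ≠ ∅` -/
  sss_nonempty : ∃ v, sss v
  /-- `H^1(F_S/F, E_{p^∞})` -/
  H1F : Type
  [abH1F : AddCommGroup H1F]
  /-- `H^2(F_S/F, E_{p^∞})` -/
  H2F : Type
  [abH2F : AddCommGroup H2F]
  /-- `J_v(E/F) = ⊕_{w∣v} H^1(F_w, E)(p)` -/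
  JF : S → Type
  [abJF : ∀ v, AddCommGroup (JF v)]
  /-- `H^1(F_S/F_cyc, E_{p^∞})` -/
  H1Cyc : Type
  [abH1Cyc : AddCommGroup H1Cyc]
  /-- the signed local modules `J_v^±(E/F_cyc)` (for `v ∉ S_{p,F}^ss` these are the
  classical `J_v(E/F_cyc)`) -/
  JCycPM : S → Type
  [abJCycPM : ∀ v, AddCommGroup (JCycPM v)]
  /-- the localization map `λ = λ_F : H^1(F_S/F, E_{p^∞}) → ⊕_{v∈S} J_v(E/F)`
  (whose kernel is `Sel_p(E/F)`) -/
  lamF : H1F →+ ∀ v, JF v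
  /-- the signed localization map `λ_cyc^± : H^1(F_S/F_cyc, E_{p^∞}) → ⊕_{v∈S} J_v^±(E/F_cyc)`
  (whose kernel is `Sel_p^±(E/F_cyc)`) -/
  lamCycPM : H1Cyc →+ ∀ v, JCycPM v
  /-- action of a fixed topological generator of `Γ` on `H^1(F_S/F_cyc, E_{p^∞})` -/
  gH1 : H1Cyc ≃+ H1Cyc
  /-- action of the generator of `Γ` on `J_v^±(E/F_cyc)` -/
  gJPM : ∀ v, JCycPM v ≃+ JCycPM v
  /-- `λ_cyc^±` is `Γ`-equivariant -/
  lamCycPM_equivariant : ∀ x v, gJPM v (lamCycPM x v) = lamCycPM (gH1 x) v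
  /-- the restriction map `β : H^1(F_S/F, E_{p^∞}) → H^1(F_S/F_cyc, E_{p^∞})` -/
  β : H1F →+ H1Cyc
  /-- `β` takes values in the `Γ`-invariants -/
  β_inv : ∀ x, gH1 (β x) = β x
  /-- the maps `γ_v^± : J_v(E/F) → J_v^±(E/F_cyc)` of the plus/minus fundamental diagram -/
  γPM : ∀ v, JF v →+ JCycPM v
  /-- each `γ_v^±` takes values in the `Γ`-invariants `J_v^±(E/F_cyc)^Γ` -/
  γPM_inv : ∀ v x, gJPM v (γPM v x) = γPM v x
  /-- commutativity of the plus/minus fundamental diagram: `γ^± ∘ λ = λ_cyc^± ∘ β` -/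
  diag_comm : ∀ x v, γPM v (lamF x v) = lamCycPM (β x) v

namespace PMCycSelmerSetting

attribute [instance] fact_p fieldF' nfF' fieldF nfF algF ellE finS abH1F abH2F abJF
  abH1Cyc abJCycPM

variable (D : PMCycSelmerSetting)

/-- `Sel_p^±(E/F_cyc)`, the signed Selmer group over `F_cyc`: the kernel of `λ_cyc^±`. -/
def SelPMCyc : AddSubgroup D.H1Cyc := D.lamCycPM.ker

/-- Surjectivity of the map `λ_cyc^{±,Γ} : H^1(F_S/F_cyc, E_{p^∞})^Γ → ⊕_{v∈S} J_v^±(E/F_cyc)^Γ`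
induced by `λ_cyc^±` on `Γ`-invariants. -/
def LamCycPMGammaSurjective : Prop :=
  ∀ y : ∀ v, D.JCycPM v, (∀ v, D.gJPM v (y v) = y v) →
    ∃ x : D.H1Cyc, D.gH1 x = x ∧ D.lamCycPM x = y

/-- Vanishing of `H^1(Γ, Sel_p^±(E/F_cyc))`.  Since `Γ ≅ ℤ_p` is procyclic with
topological generator `g` acting on the discrete module `Sel_p^±(E/F_cyc)`, `H^1(Γ, ·)`
is the cokernel of `g - 1`; its vanishing says `g - 1` is surjective there. -/
def H1GammaSelPMVanishes : Prop :=
  ∀ x ∈ D.SelPMCyc, ∃ y ∈ D.SelPMCyc, D.gH1 y - y = x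

/-- Surjectivity of the natural map `δ^± : ker γ^± → coker λ` arising from the
plus/minus fundamental diagram, where `δ^±` is the restriction to
`ker γ^± ⊆ ⊕_{v∈S} J_v(E/F)` of the projection onto `coker λ`. -/
def DeltaPMSurjective : Prop :=
  ∀ y : ∀ v, D.JF v, ∃ z : ∀ v, D.JF v,
    (∀ v, D.γPM v (z v) = 0) ∧ ∃ x : D.H1F, y - z = D.lamF x

end PMCycSelmerSetting

/-- The setting of Theorem 4.8: the plus/minus fundamental-diagram data together with
the Pontryagin dual of `Sel_p^±(E/F_cyc)`, viewed as a module over the Iwasawa algebra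
`Λ(Γ) = Z_p[[Γ]] ≅ Z_p[[T]]` (realized as `PowerSeries ℤ_[p]`, a fixed topological
generator `g` of `Γ` corresponding to `1 + T`). -/
structure DualPMCycSelmerSetting extends PMCycSelmerSetting where
  /-- the Pontryagin dual of `Sel_p^±(E/F_cyc)`, as a `Λ(Γ)`-module -/
  X : Type
  [abX : AddCommGroup X]
  [modX : Module (PowerSeries (PadicInt p)) X]
  /-- `X` is, as a group, the Pontryagin dual `Hom(Sel_p^±(E/F_cyc), ℚ/ℤ)` -/
  xiso : X ≃+ (↥lamCycPM.ker →+ AddCircle (1 : ℚ))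
  /-- the action of `1 + T ∈ Λ(Γ)` on `X` is dual to the action of the generator `g`
  of `Γ` on `Sel_p^±(E/F_cyc)` -/
  xiso_compat : ∀ (f : X) (x : H1Cyc) (hx : x ∈ lamCycPM.ker) (hgx : gH1 x ∈ lamCycPM.ker),
    xiso (((PowerSeries.X : PowerSeries (PadicInt p)) + 1) • f) ⟨x, hx⟩ =
      xiso f ⟨gH1 x, hgx⟩

namespace DualPMCycSelmerSetting

attribute [instance] abX modX

/-- The generator of `Γ` preserves the signed Selmer group, since `λ_cyc^±` is equivariant. -/
theorem gH1_mem_ker (D : DualPMCycSelmerSetting) {x : D.H1Cyc} (hx : x ∈ D.lamCycPM.ker) :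
    D.gH1 x ∈ D.lamCycPM.ker := by
  rw [AddMonoidHom.mem_ker] at hx ⊢
  funext v
  rw [← D.lamCycPM_equivariant, hx]
  simp

/-- Dual form of `H^1(Γ, Sel_p^±(E/F_cyc)) = 0`: if `T • f = 0`, then the character `f` is
invariant under `g`, so it vanishes on `(g - 1) Sel_p^± = Sel_p^±`. -/
theorem eq_zero_of_X_smul_eq_zero (D : DualPMCycSelmerSetting)
    (hH1 : D.toPMCycSelmerSetting.H1GammaSelPMVanishes) (f : D.X)
    (hf : (PowerSeries.X : PowerSeries (PadicInt D.p)) • f = 0) : f = 0 := by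
  apply D.xiso.injective
  rw [map_zero]
  ext ⟨x, hx⟩
  obtain ⟨y, hy, hyx⟩ := hH1 x hx
  have hgy := D.gH1_mem_ker hy
  have hinv := D.xiso_compat f y hy hgy
  rw [add_smul, one_smul, hf, zero_add] at hinv
  have hsub : (⟨x, hx⟩ : ↥D.lamCycPM.ker) = ⟨D.gH1 y, hgy⟩ - ⟨y, hy⟩ :=
    Subtype.ext hyx.symm
  rw [hsub, map_sub, hinv, sub_self, AddMonoidHom.zero_apply]

/-- Suppose (i) `E` has supersingular reduction at all primes of `F`
above `p` (i.e. every `v ∣ p` lies in `S_{p,F}^ss`); (ii) `λ_cyc^±` is surjective;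
(iii) `H^2(F_S/F, E_{p^∞}) = 0`; and (iv) `H^1(Γ, Sel_p^±(E/F_cyc)) = 0` (equivalently
`λ_cyc^{±,Γ}` is surjective, equivalently `δ^±` is surjective).  Then the `Λ(Γ)`-module
given by the Pontryagin dual of `Sel_p^±(E/F_cyc)` admits no non-trivial finite
submodule. -/
theorem no_nontrivial_finite_submodule (D : DualPMCycSelmerSetting)
    (hss : ∀ v, D.overP v → D.sss v)
    (hsurj : Function.Surjective D.lamCycPM)
    (h2 : Subsingleton D.H2F)
    (hH1 : D.toPMCycSelmerSetting.H1GammaSelPMVanishes) :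
    ∀ Y : Submodule (PowerSeries (PadicInt D.p)) D.X,
      (Y : Set D.X).Finite → Y = ⊥ := by
  intro Y hY
  have hpow : ∀ (m : ℕ) (f : D.X),
      (PowerSeries.X : PowerSeries (PadicInt D.p)) ^ m • f = 0 → f = 0 := by
    intro m
    induction m with
    | zero => intro f hf; simpa using hf
    | succ m ih =>
      intro f hf
      rw [pow_succ, mul_smul] at hf
      exact D.eq_zero_of_X_smul_eq_zero hH1 f (ih _ hf)
  rw [Submodule.eq_bot_iff]
  intro y hy
  obtain ⟨m, n, hmn, heq⟩ := hY.exists_lt_map_eq_of_forall_mem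
    (f := fun k : ℕ => (PowerSeries.X : PowerSeries (PadicInt D.p)) ^ k • y)
    (fun k => Y.smul_mem _ hy)
  obtain ⟨k, rfl⟩ := Nat.exists_eq_add_of_lt hmn
  have hk : (1 - (PowerSeries.X : PowerSeries (PadicInt D.p)) ^ (k + 1)) • y = 0 := by
    apply hpow m
    have heq' : (PowerSeries.X : PowerSeries (PadicInt D.p)) ^ m • y =
        (PowerSeries.X : PowerSeries (PadicInt D.p)) ^ (m + k + 1) • y := heq
    rw [← mul_smul, mul_sub, mul_one, ← pow_add, ← add_assoc, sub_smul, heq', sub_self]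
  have hunit : IsUnit (1 - (PowerSeries.X : PowerSeries (PadicInt D.p)) ^ (k + 1)) := by
    rw [PowerSeries.isUnit_iff_constantCoeff]
    simp
  exact hunit.smul_eq_zero.mp hk

end DualPMCycSelmerSetting
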